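/- Let k be a field, n ≥ 0, and consider the polynomial ring k[y₁,…,yₙ,α]. Let o ≥ 2 and 0 < c < o be integers, q ∈ k[y₁,…,yₙ], and let J be an ideal of k[y₁,…,yₙ,α] generated by elements of the ideal (y₁,…,yₙ) that are homogeneous with respect to the grading by the α-degree. Set R = k[y₁,…,yₙ,α]/J and suppose that ann_R(α^o) ⊆ ann_R(α^c) and ann_R(α^o) ⊆ ann_R(q), where ann_R(r) = {s ∈ R : s·r = 0}. Then the k[t]-algebra k[y₁,…,yₙ,α,t]/((α^o − t·α^c − q) + J·k[y₁,…,yₙ,α,t]) is flat as a k[t]-module. -/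

import Mathlib

/-- The ideal `(α^o − t·α^c − q) + J·k[y₁,…,yₙ,α,t]` of `k[y₁,…,yₙ,α,t]`, where
`k[y₁,…,yₙ,α,t] = k[z₁,…,zₙ₊₂]` with `α = zₙ₊₁`, `t = zₙ₊₂`, and `J` is extended along
the inclusion `k[y₁,…,yₙ,α] → k[y₁,…,yₙ,α,t]`. -/
noncomputable def deformIdeal {k : Type*} [Field k] {n : ℕ} (o c : ℕ)
    (q : MvPolynomial (Fin n) k) (J : Ideal (MvPolynomial (Fin (n + 1)) k)) :
    Ideal (MvPolynomial (Fin (n + 2)) k) :=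
  Ideal.span
    {(MvPolynomial.X (Fin.castSucc (Fin.last n)) : MvPolynomial (Fin (n + 2)) k) ^ o -
      MvPolynomial.X (Fin.last (n + 1)) * MvPolynomial.X (Fin.castSucc (Fin.last n)) ^ c -
      MvPolynomial.rename (Fin.castSucc ∘ Fin.castSucc) q}
  ⊔ Ideal.map (MvPolynomial.rename (Fin.castSucc : Fin (n + 1) → Fin (n + 2))) J

/-- The `k`-algebra map `k[t] → k[y₁,…,yₙ,α,t]/((α^o − t·α^c − q) + J)` giving the
quotient its `k[t]`-algebra structure. -/
noncomputable def deformStructMap {k : Type*} [Field k] {n : ℕ} (o c : ℕ)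
    (q : MvPolynomial (Fin n) k) (J : Ideal (MvPolynomial (Fin (n + 1)) k)) :
    Polynomial k →+* (MvPolynomial (Fin (n + 2)) k ⧸ deformIdeal o c q J) :=
  (Polynomial.aeval
    (Ideal.Quotient.mk (deformIdeal o c q J)
      (MvPolynomial.X (Fin.last (n + 1))))).toRingHom

/-! Since `k[t]` is a principal ideal domain, it suffices that multiplication by every monic `p(t)`
is injective on `R[t]/(F)`, where `R = k[y₁,…,yₙ,α]/J` and `F = α^o - tα^c - q`. If `p f = F g`,
then `F` annihilates the class of `g` in `S = R[t]/(p)`. The ring `S` is still graded by the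
`α`-degree and is free over `R`, so the annihilator conditions pass from `R` to `S`. As `α^o` is the
component of `F` of highest degree, comparing top degree components gives `α^o g = 0` in `S`:
whenever `α^o` annihilates the leading component of `g`, the conditions make `F` annihilate it too,
so that it can be removed. Hence `α^o`, and with it `F`, annihilates the remainder `r` of `g` modulo
`p`. Therefore `p f = F (g - r)`, and cancelling the monic `p` shows that `F` divides `f`. -/

open Polynomial

section LeadingCoefficient

theorem C_mul_eq_zero_of_mul_eq_zero {A : Type*} [CommRing A] {F : A[X]} {m : ℕ}
    (hdeg : F.natDegree ≤ m) (hann : ∀ s, F.coeff m * s = 0 → F * C s = 0)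
    {g : A[X]} (h : F * g = 0) : C (F.coeff m) * g = 0 := by
  induction hn : g.support.card generalizing g with
  | zero => rw [Finset.card_eq_zero, support_eq_empty] at hn; rw [hn, mul_zero]
  | succ n ih =>
    have hlead : F.coeff m * g.leadingCoeff = 0 := by
      rw [leadingCoeff, ← coeff_mul_add_eq_of_natDegree_le hdeg le_rfl, h, coeff_zero]
    have htail : F * g.eraseLead = 0 := by
      rw [← self_sub_C_mul_X_pow, mul_sub, h, ← mul_assoc, hann _ hlead, zero_mul, sub_zero]
    rw [← g.eraseLead_add_C_mul_X_pow, mul_add, ih htail (card_support_eraseLead' hn), ← mul_assoc,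
      ← C_mul, hlead, C_0, zero_mul, add_zero]

-- Applying `δ` turns a top degree argument in `S` into a leading coefficient argument in `S[X]`.
theorem mul_eq_zero_of_sub_mul_eq_zero {S : Type*} [CommRing S] (δ : S →+* S[X])
    (hδ : ∀ s, (δ s).eval 1 = s) {u v : S} {m : ℕ} (hu : δ u = C u * X ^ m)
    (hv : (δ v).degree < m) (hann : ∀ s, u * s = 0 → δ v * C s = 0)
    {s : S} (h : (u - v) * s = 0) : u * s = 0 := by
  have hdeg : (δ (u - v)).natDegree ≤ m := by
    rw [map_sub, hu]
    exact (natDegree_sub_le_of_le (natDegree_C_mul_X_pow_le u m)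
      (natDegree_le_of_degree_le hv.le)).trans_eq (max_self m)
  have hcoeff : (δ (u - v)).coeff m = u := by
    rw [map_sub, hu, coeff_sub, coeff_C_mul_X_pow, if_pos rfl, coeff_eq_zero_of_degree_lt hv,
      sub_zero]
  have hkill : C u * δ s = 0 := by
    rw [← hcoeff]
    refine C_mul_eq_zero_of_mul_eq_zero hdeg (fun s hs => ?_) (by rw [← map_mul, h, map_zero])
    rw [hcoeff] at hs
    rw [map_sub, hu, sub_mul, hann s hs, mul_right_comm, ← C_mul, hs, C_0, zero_mul, sub_zero]
  simpa only [eval_mul, eval_C, hδ, eval_zero] using congrArg (eval 1) hkill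

end LeadingCoefficient

section FreeExtension

theorem smul_eq_zero_of_forall_mul_eq_zero {R M : Type*} [CommRing R] [AddCommGroup M] [Module R M]
    [Module.Free R M] {u v : R} (huv : ∀ r, r * u = 0 → r * v = 0) {x : M} (hx : u • x = 0) :
    v • x = 0 := by
  let b := Module.Free.chooseBasis R M
  refine b.ext_elem fun i => ?_
  have hi : u * b.repr x i = 0 := by
    rw [← smul_eq_mul, ← Finsupp.smul_apply, ← map_smul, hx, map_zero, Finsupp.zero_apply]
  rw [map_smul, Finsupp.smul_apply, smul_eq_mul, mul_comm, huv _ (by rw [mul_comm, hi]), map_zero,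
    Finsupp.zero_apply]

theorem smul_mk_eq_zero_iff_smul_modByMonic_eq_zero {R : Type*} [CommRing R] {P : R[X]}
    (hP : P.Monic) (u : R) (g : R[X]) :
    u • AdjoinRoot.mk P g = 0 ↔ u • (g %ₘ P) = 0 := by
  rw [AdjoinRoot.smul_mk, AdjoinRoot.mk_eq_zero, ← modByMonic_eq_zero_iff_dvd hP,
    smul_modByMonic]

variable {k R : Type*} [CommRing k] [CommRing R] [Algebra k R] (δ : R →ₐ[k] R[X]) (p : k[X])

/-- The extension of a coaction `δ : R → R[T]` to `R[X]/(p)`, for `p` with coefficients in `k`,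
in which the class of `X` has degree `0`. A coaction encodes a grading by sending `r = ∑ rᵢ`, with
`rᵢ` homogeneous of degree `i`, to `∑ rᵢ T ^ i`; its counit law reads `(δ r).eval 1 = r`. -/
noncomputable def adjoinRootCoaction :
    AdjoinRoot (p.map (algebraMap k R)) →+* (AdjoinRoot (p.map (algebraMap k R)))[X] :=
  AdjoinRoot.lift ((mapRingHom (AdjoinRoot.of _)).comp δ) (C (AdjoinRoot.root _)) <| by
    have hconst : ((mapRingHom (AdjoinRoot.of (p.map (algebraMap k R)))).comp
        (δ : R →+* R[X])).comp (algebraMap k R) =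
        C.comp ((AdjoinRoot.of (p.map (algebraMap k R))).comp (algebraMap k R)) := by
      ext r : 1
      simp [Polynomial.algebraMap_apply]
    rw [eval₂_map, hconst, ← hom_eval₂, ← eval₂_map, AdjoinRoot.eval₂_root, C_0]

theorem adjoinRootCoaction_of (r : R) :
    adjoinRootCoaction δ p (AdjoinRoot.of _ r) = (δ r).map (AdjoinRoot.of _) :=
  AdjoinRoot.lift_of _

theorem adjoinRootCoaction_root :
    adjoinRootCoaction δ p (AdjoinRoot.root _) = C (AdjoinRoot.root _) :=
  AdjoinRoot.lift_root _

theorem eval_one_adjoinRootCoaction (hδ : ∀ r, (δ r).eval 1 = r)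
    (s : AdjoinRoot (p.map (algebraMap k R))) : (adjoinRootCoaction δ p s).eval 1 = s := by
  suffices h : (evalRingHom 1).comp (adjoinRootCoaction δ p) = RingHom.id _ from
    RingHom.congr_fun h s
  refine AdjoinRoot.ringHom_ext (RingHom.ext fun r => ?_) ?_
  · simp only [RingHom.comp_apply, adjoinRootCoaction_of, coe_evalRingHom, RingHom.id_apply,
      eval_one_map, hδ]
  · simp only [RingHom.comp_apply, adjoinRootCoaction_root, coe_evalRingHom, eval_C,
      RingHom.id_apply]

end FreeExtension

section Trinomial

variable {k R : Type*} [CommRing k] [CommRing R] [Algebra k R] {δ : R →ₐ[k] R[X]}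
  {u v w : R} {m i j : ℕ}

theorem smul_mk_eq_zero_of_dvd_trinomial_mul (hδ : ∀ r, (δ r).eval 1 = r)
    (hu : δ u = C u * X ^ m) (hv : δ v = C v * X ^ i) (hw : δ w = C w * X ^ j)
    (hi : i < m) (hj : j < m) (huv : ∀ s, s * u = 0 → s * v = 0)
    (huw : ∀ s, s * u = 0 → s * w = 0) {p : k[X]} (hp : p.Monic) {g : R[X]}
    (h : p.map (algebraMap k R) ∣ (C u - X * C v - C w) * g) :
    u • AdjoinRoot.mk (p.map (algebraMap k R)) g = 0 := by
  have : Module.Free R (AdjoinRoot (p.map (algebraMap k R))) := (hp.map _).free_adjoinRoot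
  let x := AdjoinRoot.root (p.map (algebraMap k R))
  let ι := AdjoinRoot.of (p.map (algebraMap k R))
  have hsmul (r : R) (s : AdjoinRoot (p.map (algebraMap k R))) : r • s = ι r * s :=
    Algebra.smul_def r s
  have hlead : adjoinRootCoaction δ p (ι u) = C (ι u) * X ^ m := by
    simp [ι, adjoinRootCoaction_of, hu]
  have hlower : adjoinRootCoaction δ p (x * ι v + ι w) =
      C (x * ι v) * X ^ i + C (ι w) * X ^ j := by
    simp [x, ι, adjoinRootCoaction_root, adjoinRootCoaction_of, hv, hw, mul_assoc]
  have hdeg : (adjoinRootCoaction δ p (x * ι v + ι w)).degree < m := by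
    rw [hlower]
    exact (degree_add_le _ _).trans_lt <| max_lt
      ((degree_C_mul_X_pow_le i _).trans_lt (Nat.cast_lt.2 hi))
      ((degree_C_mul_X_pow_le j _).trans_lt (Nat.cast_lt.2 hj))
  rw [hsmul]
  refine mul_eq_zero_of_sub_mul_eq_zero (adjoinRootCoaction δ p)
    (eval_one_adjoinRootCoaction δ p hδ) hlead hdeg (fun s hs => ?_) ?_
  · rw [← hsmul] at hs
    have hvs : ι v * s = 0 := by rw [← hsmul, smul_eq_zero_of_forall_mul_eq_zero huv hs]
    have hws : ι w * s = 0 := by rw [← hsmul, smul_eq_zero_of_forall_mul_eq_zero huw hs]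
    rw [hlower, add_mul, mul_right_comm, ← C_mul, mul_assoc x, hvs, mul_right_comm, ← C_mul, hws]
    simp only [mul_zero, C_0, zero_mul, add_zero]
  · rw [← AdjoinRoot.mk_eq_zero] at h
    simpa [x, ι, sub_sub, X_mul_C, mul_comm (AdjoinRoot.root _)] using h

theorem trinomial_dvd_of_dvd_monic_mul (hδ : ∀ r, (δ r).eval 1 = r)
    (hu : δ u = C u * X ^ m) (hv : δ v = C v * X ^ i) (hw : δ w = C w * X ^ j)
    (hi : i < m) (hj : j < m) (huv : ∀ s, s * u = 0 → s * v = 0)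
    (huw : ∀ s, s * u = 0 → s * w = 0) {p : k[X]} (hp : p.Monic) {f : R[X]}
    (h : C u - X * C v - C w ∣ p.map (algebraMap k R) * f) : C u - X * C v - C w ∣ f := by
  set F := C u - X * C v - C w with hF
  set P := p.map (algebraMap k R)
  have hmonic : P.Monic := hp.map _
  obtain ⟨g, hg⟩ := h
  have hru : u • (g %ₘ P) = 0 :=
    (smul_mk_eq_zero_iff_smul_modByMonic_eq_zero hmonic u g).1 <|
      smul_mk_eq_zero_of_dvd_trinomial_mul hδ hu hv hw hi hj huv huw hp ⟨f, hg.symm⟩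
  have hrv : v • (g %ₘ P) = 0 := smul_eq_zero_of_forall_mul_eq_zero huv hru
  have hrw : w • (g %ₘ P) = 0 := smul_eq_zero_of_forall_mul_eq_zero huw hru
  have hFr : F * (g %ₘ P) = 0 := by
    rw [hF, sub_mul, sub_mul, mul_assoc, ← smul_eq_C_mul, ← smul_eq_C_mul, ← smul_eq_C_mul, hru,
      hrv, hrw, mul_zero, sub_zero, sub_zero]
  have hquot : P * (f - F * (g /ₘ P)) = 0 := by
    calc P * (f - F * (g /ₘ P)) = F * g - F * (P * (g /ₘ P)) := by rw [mul_sub, hg]; ring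
      _ = F * (g %ₘ P) := by rw [← mul_sub, ← modByMonic_eq_sub_mul_div]
      _ = 0 := hFr
  exact ⟨g /ₘ P, sub_eq_zero.1 (hmonic.mul_right_eq_zero_iff.1 hquot)⟩

end Trinomial

section WeightCoaction

variable {σ R : Type*} [CommRing R] (w : σ → ℕ)

/-- The coaction `R[σ] → R[σ][T]` of the grading in which the variable `i` has weight `w i`; it
multiplies a weighted homogeneous polynomial of weight `d` by `T ^ d`. -/
noncomputable def weightCoaction : MvPolynomial σ R →ₐ[R] (MvPolynomial σ R)[X] :=
  MvPolynomial.aeval fun i => C (MvPolynomial.X i) * X ^ w i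

theorem eval_one_weightCoaction (f : MvPolynomial σ R) : (weightCoaction w f).eval 1 = f := by
  suffices h : ((aeval 1).restrictScalars R).comp (weightCoaction w) =
      AlgHom.id R (MvPolynomial σ R) by
    simpa only [AlgHom.comp_apply, AlgHom.restrictScalars_apply, coe_aeval_eq_eval,
      AlgHom.id_apply] using AlgHom.congr_fun h f
  ext i : 1
  simp [weightCoaction]

theorem weightCoaction_of_isWeightedHomogeneous {f : MvPolynomial σ R} {d : ℕ}
    (hf : f.IsWeightedHomogeneous w d) : weightCoaction w f = C f * X ^ d := by
  induction hf using MvPolynomial.IsWeightedHomogeneous.induction_on with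
  | zero => simp
  | add f g _ _ hf hg => rw [map_add, hf, hg, C_add, add_mul]
  | monomial e r he =>
    have hX : (e.prod fun i n => (X ^ w i : (MvPolynomial σ R)[X]) ^ n) = X ^ d := by
      simp only [← he, Finsupp.weight_apply, Finsupp.sum, Finsupp.prod, ← pow_mul, smul_eq_mul,
        Finset.prod_pow_eq_pow_sum, mul_comm]
    have hC : (C (MvPolynomial.monomial e r) : (MvPolynomial σ R)[X]) =
        C (MvPolynomial.C r) * e.prod fun i n => C (MvPolynomial.X i) ^ n := by
      rw [MvPolynomial.monomial_eq, C_mul, Finsupp.prod, map_prod]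
      simp only [C_pow, Finsupp.prod]
    rw [weightCoaction, MvPolynomial.aeval_monomial, hC, ← hX, mul_assoc, ← Finsupp.prod_mul]
    simp [mul_pow, Polynomial.algebraMap_apply]

variable {w} {G : Set (MvPolynomial σ R)}
  (hG : ∀ g ∈ G, ∃ d, g.IsWeightedHomogeneous w d)

/-- The coaction of the weight grading on the quotient of `R[σ]` by an ideal generated by weighted
homogeneous polynomials. -/
noncomputable def quotientWeightCoaction :
    (MvPolynomial σ R ⧸ Ideal.span G) →ₐ[R] (MvPolynomial σ R ⧸ Ideal.span G)[X] :=
  Ideal.Quotient.liftₐ (Ideal.span G)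
    ((mapAlgHom (Ideal.Quotient.mkₐ R (Ideal.span G))).comp (weightCoaction w)) <| by
    suffices h : Ideal.span G ≤ RingHom.ker
        ((mapAlgHom (Ideal.Quotient.mkₐ R (Ideal.span G))).comp (weightCoaction w)) from
      fun f hf => h hf
    refine Ideal.span_le.2 fun g hg => ?_
    obtain ⟨d, hd⟩ := hG g hg
    have hmk : Ideal.Quotient.mk (Ideal.span G) g = 0 :=
      Ideal.Quotient.eq_zero_iff_mem.2 (Ideal.subset_span hg)
    simp [weightCoaction_of_isWeightedHomogeneous w hd, hmk]

theorem quotientWeightCoaction_mk (f : MvPolynomial σ R) :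
    quotientWeightCoaction hG (Ideal.Quotient.mk _ f) =
      (weightCoaction w f).map (Ideal.Quotient.mk _) :=
  rfl

theorem eval_one_quotientWeightCoaction (x : MvPolynomial σ R ⧸ Ideal.span G) :
    (quotientWeightCoaction hG x).eval 1 = x := by
  obtain ⟨f, rfl⟩ := Ideal.Quotient.mk_surjective x
  rw [quotientWeightCoaction_mk, eval_one_map, eval_one_weightCoaction]

theorem quotientWeightCoaction_mk_of_isWeightedHomogeneous {f : MvPolynomial σ R} {d : ℕ}
    (hf : f.IsWeightedHomogeneous w d) :
    quotientWeightCoaction hG (Ideal.Quotient.mk _ f) = C (Ideal.Quotient.mk _ f) * X ^ d := by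
  rw [quotientWeightCoaction_mk, weightCoaction_of_isWeightedHomogeneous w hf, Polynomial.map_mul,
    map_C, Polynomial.map_pow, map_X]

end WeightCoaction

section LastVariable

variable {R : Type*} [CommRing R] {n : ℕ}

theorem isWeightedHomogeneous_single_one_iff {σ : Type*} [DecidableEq σ] {i : σ}
    {f : MvPolynomial σ R} {d : ℕ} :
    f.IsWeightedHomogeneous (Pi.single i 1) d ↔ ∀ b ∈ f.support, b i = d := by
  simp only [MvPolynomial.IsWeightedHomogeneous, Finsupp.weight_single_one_apply,
    MvPolynomial.mem_support_iff]

theorem isWeightedHomogeneous_rename_castSucc (q : MvPolynomial (Fin n) R) :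
    (MvPolynomial.rename Fin.castSucc q).IsWeightedHomogeneous
      (Pi.single (Fin.last n) 1 : _ → ℕ) 0 := by
  classical
  refine isWeightedHomogeneous_single_one_iff.2 fun b hb => ?_
  obtain ⟨e, rfl, -⟩ := MvPolynomial.coeff_rename_ne_zero _ _ _ (MvPolynomial.mem_support_iff.1 hb)
  exact Finsupp.mapDomain_of_notMem_range _ _ fun ⟨i, hi⟩ => i.castSucc_ne_last hi

variable (R n) in
/-- The identification `R[z₁,…,zₙ₊₁] ≃ R[z₁,…,zₙ][t]` sending the last variable to `t`. -/
noncomputable def lastVariableEquiv :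
    MvPolynomial (Fin (n + 1)) R ≃ₐ[R] (MvPolynomial (Fin n) R)[X] :=
  (MvPolynomial.renameEquiv R finSuccEquivLast).trans (MvPolynomial.optionEquivLeft R (Fin n))

theorem lastVariableEquiv_X_last : lastVariableEquiv R n (MvPolynomial.X (Fin.last n)) = X := by
  simp [lastVariableEquiv]

theorem lastVariableEquiv_rename (f : MvPolynomial (Fin n) R) :
    lastVariableEquiv R n (MvPolynomial.rename Fin.castSucc f) = C f := by
  suffices h : (lastVariableEquiv R n : _ →ₐ[R] _).comp (MvPolynomial.rename Fin.castSucc) =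
      (CAlgHom : MvPolynomial (Fin n) R →ₐ[R] _) from AlgHom.congr_fun h f
  ext i : 1
  simp [lastVariableEquiv]

variable (J : Ideal (MvPolynomial (Fin n) R))

/-- The canonical map `R[z₁,…,zₙ₊₁] → (R[z₁,…,zₙ]/J)[t]` sending the last variable to `t`. -/
noncomputable def toPolynomialQuotient :
    MvPolynomial (Fin (n + 1)) R →ₐ[R] (MvPolynomial (Fin n) R ⧸ J)[X] :=
  (mapAlgHom (Ideal.Quotient.mkₐ R J)).comp (lastVariableEquiv R n : _ →ₐ[R] _)

theorem toPolynomialQuotient_apply (f : MvPolynomial (Fin (n + 1)) R) :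
    toPolynomialQuotient J f = (lastVariableEquiv R n f).map (Ideal.Quotient.mk J) :=
  rfl

theorem toPolynomialQuotient_X_last :
    toPolynomialQuotient J (MvPolynomial.X (Fin.last n)) = X := by
  rw [toPolynomialQuotient_apply, lastVariableEquiv_X_last, map_X]

theorem toPolynomialQuotient_rename (f : MvPolynomial (Fin n) R) :
    toPolynomialQuotient J (MvPolynomial.rename Fin.castSucc f) = C (Ideal.Quotient.mk J f) := by
  rw [toPolynomialQuotient_apply, lastVariableEquiv_rename, map_C]

theorem toPolynomialQuotient_X_castSucc (i : Fin n) :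
    toPolynomialQuotient J (MvPolynomial.X i.castSucc) =
      C (Ideal.Quotient.mk J (MvPolynomial.X i)) := by
  rw [← MvPolynomial.rename_X, toPolynomialQuotient_rename]

theorem toPolynomialQuotient_surjective : Function.Surjective (toPolynomialQuotient J) :=
  (map_surjective _ Ideal.Quotient.mk_surjective).comp (lastVariableEquiv R n).surjective

theorem ker_toPolynomialQuotient :
    RingHom.ker (toPolynomialQuotient J) = J.map (MvPolynomial.rename (R := R) Fin.castSucc) := by
  have hcomp : ((lastVariableEquiv R n).toRingEquiv.toRingHom).comp
      (MvPolynomial.rename (R := R) (Fin.castSucc (n := n))).toRingHom = C :=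
    RingHom.ext lastVariableEquiv_rename
  have hC : J.map C =
      (J.map (MvPolynomial.rename (R := R) Fin.castSucc)).map (lastVariableEquiv R n) := by
    rw [← hcomp, ← Ideal.map_map]
    rfl
  calc RingHom.ker (toPolynomialQuotient J)
      = (RingHom.ker (mapRingHom (Ideal.Quotient.mk J))).comap (lastVariableEquiv R n) := rfl
    _ = (J.map C).comap (lastVariableEquiv R n) := by rw [ker_mapRingHom, Ideal.mk_ker]
    _ = J.map (MvPolynomial.rename (R := R) Fin.castSucc) := by
      rw [hC, Ideal.comap_map_of_bijective _ (lastVariableEquiv R n).bijective]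

end LastVariable

theorem flat_of_forall_monic_mul_eq_zero {k B : Type*} [Field k] [CommRing B] {φ : k[X] →+* B}
    (h : ∀ p : k[X], p.Monic → ∀ x, φ p * x = 0 → x = 0) : φ.Flat := by
  let := φ.toAlgebra
  have : Module.IsTorsionFree k[X] B := .of_smul_eq_zero fun p x hx => by
    refine or_iff_not_imp_left.2 fun hp => h _ (monic_mul_leadingCoeff_inv hp) x ?_
    have hpx : φ p * x = 0 := hx
    rw [map_mul, mul_right_comm, hpx, zero_mul]
  exact inferInstanceAs (Module.Flat k[X] B)

section DeformIdeal

variable {k : Type*} [Field k] {n : ℕ} (o c : ℕ) (q : MvPolynomial (Fin n) k)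
  (J : Ideal (MvPolynomial (Fin (n + 1)) k))

/-- The polynomial `α^o − t·α^c − q` over `k[y₁,…,yₙ,α]/J`. -/
noncomputable def deformTrinomial : (MvPolynomial (Fin (n + 1)) k ⧸ J)[X] :=
  C (Ideal.Quotient.mk J (MvPolynomial.X (Fin.last n)) ^ o) -
    X * C (Ideal.Quotient.mk J (MvPolynomial.X (Fin.last n)) ^ c) -
    C (Ideal.Quotient.mk J (MvPolynomial.rename Fin.castSucc q))

theorem deformIdeal_eq_comap_span_deformTrinomial :
    deformIdeal o c q J =
      (Ideal.span {deformTrinomial o c q J}).comap (toPolynomialQuotient J) := by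
  have himage : toPolynomialQuotient J (MvPolynomial.X (Fin.last n).castSucc ^ o -
      MvPolynomial.X (Fin.last (n + 1)) * MvPolynomial.X (Fin.last n).castSucc ^ c -
      MvPolynomial.rename (Fin.castSucc ∘ Fin.castSucc) q) = deformTrinomial o c q J := by
    simp only [deformTrinomial, map_sub, map_mul, map_pow, toPolynomialQuotient_X_castSucc,
      toPolynomialQuotient_X_last, ← MvPolynomial.rename_rename, toPolynomialQuotient_rename]
  rw [← himage, ← Set.image_singleton, ← Ideal.map_span,
    Ideal.comap_map_of_surjective' _ (toPolynomialQuotient_surjective J),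
    ker_toPolynomialQuotient, deformIdeal]

theorem mk_deformIdeal_eq_zero_iff (f : MvPolynomial (Fin (n + 2)) k) :
    Ideal.Quotient.mk (deformIdeal o c q J) f = 0 ↔
      deformTrinomial o c q J ∣ toPolynomialQuotient J f := by
  rw [Ideal.Quotient.eq_zero_iff_mem, deformIdeal_eq_comap_span_deformTrinomial, Ideal.mem_comap]
  exact Ideal.mem_span_singleton (α := (MvPolynomial (Fin (n + 1)) k ⧸ J)[X])

theorem deformStructMap_apply (p : k[X]) :
    deformStructMap o c q J p =
      Ideal.Quotient.mk _ (aeval (MvPolynomial.X (Fin.last (n + 1))) p) :=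
  aeval_algHom_apply (Ideal.Quotient.mkₐ k (deformIdeal o c q J)) _ p

theorem deformStructMap_mul_mk_eq_zero_iff (p : k[X]) (f : MvPolynomial (Fin (n + 2)) k) :
    deformStructMap o c q J p * Ideal.Quotient.mk _ f = 0 ↔
      deformTrinomial o c q J ∣ p.map (algebraMap k _) * toPolynomialQuotient J f := by
  rw [deformStructMap_apply, ← map_mul, mk_deformIdeal_eq_zero_iff, map_mul, ← aeval_algHom_apply,
    toPolynomialQuotient_X_last, aeval_X_left_eq_map]

end DeformIdeal

theorem deformations_stmt18_general {k : Type*} [Field k] {n : ℕ}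
    (o c : ℕ) (hco : c < o)
    (q : MvPolynomial (Fin n) k)
    (J : Ideal (MvPolynomial (Fin (n + 1)) k))
    (G : Set (MvPolynomial (Fin (n + 1)) k))
    (hJG : J = Ideal.span G)
    (hGhom : ∀ g ∈ G, ∃ d : ℕ, ∀ b ∈ g.support, b (Fin.last n) = d)
    (hann1 : ∀ s : MvPolynomial (Fin (n + 1)) k ⧸ J,
      s * (Ideal.Quotient.mk J (MvPolynomial.X (Fin.last n))) ^ o = 0 →
      s * (Ideal.Quotient.mk J (MvPolynomial.X (Fin.last n))) ^ c = 0)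
    (hann2 : ∀ s : MvPolynomial (Fin (n + 1)) k ⧸ J,
      s * (Ideal.Quotient.mk J (MvPolynomial.X (Fin.last n))) ^ o = 0 →
      s * (Ideal.Quotient.mk J (MvPolynomial.rename Fin.castSucc q)) = 0) :
    RingHom.Flat (deformStructMap o c q J) := by
  subst hJG
  have hG : ∀ g ∈ G, ∃ d, g.IsWeightedHomogeneous (Pi.single (Fin.last n) 1 : _ → ℕ) d := by
    simpa only [isWeightedHomogeneous_single_one_iff] using hGhom
  have hα (m : ℕ) :
      quotientWeightCoaction hG (Ideal.Quotient.mk _ (MvPolynomial.X (Fin.last n)) ^ m) =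
        C (Ideal.Quotient.mk _ (MvPolynomial.X (Fin.last n)) ^ m) * X ^ m := by
    simpa using quotientWeightCoaction_mk_of_isWeightedHomogeneous hG
      ((MvPolynomial.isWeightedHomogeneous_X k _ (Fin.last n)).pow m)
  have hq := quotientWeightCoaction_mk_of_isWeightedHomogeneous hG
    (isWeightedHomogeneous_rename_castSucc q)
  refine flat_of_forall_monic_mul_eq_zero fun p hp x hx => ?_
  obtain ⟨f, rfl⟩ := Ideal.Quotient.mk_surjective x
  rw [deformStructMap_mul_mk_eq_zero_iff] at hx
  rw [mk_deformIdeal_eq_zero_iff]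
  exact trinomial_dvd_of_dvd_monic_mul (eval_one_quotientWeightCoaction hG) (hα o) (hα c) hq hco
    (c.zero_le.trans_lt hco) hann1 hann2 hp hx

/-- Let `k` be a field, `n ≥ 0`, and consider `k[y₁,…,yₙ,α]` (here
realized as `k[y₁,…,yₙ₊₁]` with `α = yₙ₊₁`). Let `o ≥ 2`, `0 < c < o`, `q ∈ k[y₁,…,yₙ]`,
and let `J` be an ideal of `k[y₁,…,yₙ,α]` generated by elements of the ideal `(y₁,…,yₙ)`
that are homogeneous with respect to the `α`-degree. Set `R = k[y₁,…,yₙ,α]/J` and assume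
`ann_R(α^o) ⊆ ann_R(α^c)` and `ann_R(α^o) ⊆ ann_R(q)`. Then the `k[t]`-algebra
`k[y₁,…,yₙ,α,t]/((α^o − t·α^c − q) + J·k[y,α,t])` is flat over `k[t]`. -/
theorem deformations_stmt18 {k : Type*} [Field k] {n : ℕ}
    (o c : ℕ) (ho : 2 ≤ o) (hc : 0 < c) (hco : c < o)
    (q : MvPolynomial (Fin n) k)
    (J : Ideal (MvPolynomial (Fin (n + 1)) k))
    -- J is generated by elements of (y₁,…,yₙ) homogeneous in the α-degree
    (G : Set (MvPolynomial (Fin (n + 1)) k))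
    (hJG : J = Ideal.span G)
    (hGy : ∀ g ∈ G,
      g ∈ Ideal.span (Set.range fun i : Fin n =>
        (MvPolynomial.X (Fin.castSucc i) : MvPolynomial (Fin (n + 1)) k)))
    (hGhom : ∀ g ∈ G, ∃ d : ℕ, ∀ b ∈ g.support, b (Fin.last n) = d)
    -- ann_R(α^o) ⊆ ann_R(α^c)
    (hann1 : ∀ s : MvPolynomial (Fin (n + 1)) k ⧸ J,
      s * (Ideal.Quotient.mk J (MvPolynomial.X (Fin.last n))) ^ o = 0 →
      s * (Ideal.Quotient.mk J (MvPolynomial.X (Fin.last n))) ^ c = 0)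
    -- ann_R(α^o) ⊆ ann_R(q)
    (hann2 : ∀ s : MvPolynomial (Fin (n + 1)) k ⧸ J,
      s * (Ideal.Quotient.mk J (MvPolynomial.X (Fin.last n))) ^ o = 0 →
      s * (Ideal.Quotient.mk J (MvPolynomial.rename Fin.castSucc q)) = 0) :
    RingHom.Flat (deformStructMap o c q J) :=
  deformations_stmt18_general o c hco q J G hJG hGhom hann1 hann2
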